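/- Let b₁* ∈ ℝ² be a unit vector, let α ∈ ℝ, and set b₂* := R(α) b₁*. Consider the cascade system on the torus: ḃ₁ = P_{b₁} b₁*, ḃ₂ = P_{b₂} R(α) b₁. Then for (Lebesgue-)almost every pair of initial angles (θ₁, θ₂) ∈ ℝ², every differentiable solution (b₁, b₂) : [0, ∞) → ℝ² × ℝ² of this system with b₁(0) = (cos θ₁, sin θ₁) and b₂(0) = (cos θ₂, sin θ₂) satisfies b₁(t) → b₁* and b₂(t) → b₂* = R(α) b₁* as t → ∞. That is, the equilibrium (b₁*, R(α)b₁*) is almost globally asymptotically attractive. -/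

import Mathlib

open scoped RealInnerProductSpace
open Real Filter MeasureTheory

/-- The orthogonal projection `P_b v = (I₂ - b bᵀ) v = v - ⟨b, v⟩ b`. -/
noncomputable def proj (b v : EuclideanSpace ℝ (Fin 2)) : EuclideanSpace ℝ (Fin 2) :=
  v - ⟪b, v⟫ • b

/-- The counterclockwise rotation of the plane through angle α. -/
noncomputable def rot (α : ℝ) (v : EuclideanSpace ℝ (Fin 2)) : EuclideanSpace ℝ (Fin 2) :=
  (WithLp.equiv 2 (Fin 2 → ℝ)).symm
    ![Real.cos α * v 0 - Real.sin α * v 1, Real.sin α * v 0 + Real.cos α * v 1]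

/-- The unit vector at angle θ: (cos θ, sin θ). -/
noncomputable def dir (θ : ℝ) : EuclideanSpace ℝ (Fin 2) :=
  (WithLp.equiv 2 (Fin 2 → ℝ)).symm ![Real.cos θ, Real.sin θ]

/-- A scalar homogeneous linear equation is solved by an exponential factor. -/
lemma exists_eq_mul_exp_of_hasDerivAt {y g : ℝ → ℝ}
    (hy : ∀ t ≥ (0 : ℝ), HasDerivAt y (g t * y t) t) (hg : ContinuousOn g (Set.Ici 0)) :
    ∃ G : ℝ → ℝ, ∀ t ≥ (0 : ℝ), y t = y 0 * Real.exp (G t) := by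
  have hcont : Continuous fun t : ℝ => g (max 0 t) :=
    hg.comp_continuous (by fun_prop) fun t => le_max_left 0 t
  refine ⟨fun t => ∫ s in (0 : ℝ)..t, g (max 0 s), fun t ht => ?_⟩
  have hG : ∀ s, HasDerivAt (fun t => ∫ s in (0 : ℝ)..t, g (max 0 s)) (g (max 0 s)) s :=
    fun s => hcont.integral_hasStrictDerivAt 0 s |>.hasDerivAt
  have hz : ∀ s ≥ (0 : ℝ), HasDerivAt
      (fun t => y t * Real.exp (-∫ s in (0 : ℝ)..t, g (max 0 s))) 0 s := by
    intro s hs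
    refine ((hy s hs).mul (hG s).neg.exp).congr_deriv ?_
    rw [max_eq_right hs]
    ring
  have hconst := constant_of_has_deriv_right_zero (a := 0) (b := t)
    (fun s hs => (hz s hs.1).continuousAt.continuousWithinAt)
    (fun s hs => (hz s hs.1).hasDerivWithinAt) t ⟨ht, le_rfl⟩
  simp only [intervalIntegral.integral_same, neg_zero, Real.exp_zero, mul_one] at hconst
  rw [← hconst, mul_assoc, ← Real.exp_add]
  simp

section Projected

variable {b b' v : ℝ → EuclideanSpace ℝ (Fin 2)}

lemma continuousOn_of_hasDerivAt_proj
    (hb : ∀ t ≥ (0 : ℝ), HasDerivAt b (proj (b t) (v t)) t) : ContinuousOn b (Set.Ici 0) :=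
  fun t ht => (hb t ht).continuousAt.continuousWithinAt

lemma hasDerivAt_inner_of_proj
    (hb : ∀ t ≥ (0 : ℝ), HasDerivAt b (proj (b t) (v t)) t) (w : EuclideanSpace ℝ (Fin 2))
    {t : ℝ} (ht : 0 ≤ t) :
    HasDerivAt (fun s => ⟪b s, w⟫) (⟪v t, w⟫ - ⟪b t, v t⟫ * ⟪b t, w⟫) t := by
  refine ((hb t ht).inner ℝ (hasDerivAt_const t w)).congr_deriv ?_
  simp [proj, inner_sub_left, inner_smul_left]

lemma norm_eq_one_of_hasDerivAt_proj
    (hb : ∀ t ≥ (0 : ℝ), HasDerivAt b (proj (b t) (v t)) t) (hv : ContinuousOn v (Set.Ici 0))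
    (h0 : ‖b 0‖ = 1) : ∀ t ≥ (0 : ℝ), ‖b t‖ = 1 := by
  have hbc := continuousOn_of_hasDerivAt_proj hb
  obtain ⟨G, hG⟩ := exists_eq_mul_exp_of_hasDerivAt (y := fun t => 1 - ⟪b t, b t⟫)
    (g := fun t => -2 * ⟪b t, v t⟫)
    (fun t ht => by
      refine (((hb t ht).inner ℝ (hb t ht)).const_sub 1).congr_deriv ?_
      simp only [proj, inner_sub_left, inner_sub_right, inner_smul_left, inner_smul_right,
        real_inner_comm (b t) (v t), RCLike.conj_to_real]
      ring)
    (continuousOn_const.mul (hbc.inner hv))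
  intro t ht
  have h := hG t ht
  simp only [real_inner_self_eq_norm_sq, h0] at h
  have h1 : ‖b t‖ ^ 2 = 1 := by linarith
  nlinarith [norm_nonneg (b t)]

lemma hasDerivAt_one_sub_inner
    (hb : ∀ t ≥ (0 : ℝ), HasDerivAt b (proj (b t) (v t)) t)
    (hb' : ∀ t ≥ (0 : ℝ), HasDerivAt b' (proj (b' t) (v t)) t) {t : ℝ} (ht : 0 ≤ t) :
    HasDerivAt (fun s => 1 - ⟪b s, b' s⟫)
      (-(⟪b t, v t⟫ + ⟪b' t, v t⟫) * (1 - ⟪b t, b' t⟫)) t := by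
  refine (((hb t ht).inner ℝ (hb' t ht)).const_sub 1).congr_deriv ?_
  simp only [proj, inner_sub_left, inner_sub_right, inner_smul_left, inner_smul_right,
    real_inner_comm (b' t) (v t), RCLike.conj_to_real]
  ring

lemma exists_one_sub_inner_eq
    (hb : ∀ t ≥ (0 : ℝ), HasDerivAt b (proj (b t) (v t)) t)
    (hb' : ∀ t ≥ (0 : ℝ), HasDerivAt b' (proj (b' t) (v t)) t)
    (hv : ContinuousOn v (Set.Ici 0)) :
    ∃ G : ℝ → ℝ, ∀ t ≥ (0 : ℝ), 1 - ⟪b t, b' t⟫ = (1 - ⟪b 0, b' 0⟫) * Real.exp (G t) :=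
  exists_eq_mul_exp_of_hasDerivAt (fun _ ht => hasDerivAt_one_sub_inner hb hb' ht)
    (((continuousOn_of_hasDerivAt_proj hb).inner hv).add
      ((continuousOn_of_hasDerivAt_proj hb').inner hv)).neg

lemma eq_of_hasDerivAt_proj_of_eq
    (hb : ∀ t ≥ (0 : ℝ), HasDerivAt b (proj (b t) (v t)) t)
    (hb' : ∀ t ≥ (0 : ℝ), HasDerivAt b' (proj (b' t) (v t)) t)
    (hv : ContinuousOn v (Set.Ici 0)) (hn : ‖b 0‖ = 1) (h0 : b 0 = b' 0) :
    ∀ t ≥ (0 : ℝ), b t = b' t := by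
  obtain ⟨G, hG⟩ := exists_one_sub_inner_eq hb hb' hv
  intro t ht
  have h := hG t ht
  rw [← h0, real_inner_self_eq_norm_sq, hn] at h
  exact (inner_eq_one_iff_of_norm_eq_one (𝕜 := ℝ)
    (norm_eq_one_of_hasDerivAt_proj hb hv hn t ht)
    (norm_eq_one_of_hasDerivAt_proj hb' hv (h0 ▸ hn) t ht)).1 (by linarith)

/-- Two headings that eventually stay away from the driving direction coincide. -/
lemma eq_of_eventually_inner_le
    (hb : ∀ t ≥ (0 : ℝ), HasDerivAt b (proj (b t) (v t)) t)
    (hb' : ∀ t ≥ (0 : ℝ), HasDerivAt b' (proj (b' t) (v t)) t)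
    (hv : ContinuousOn v (Set.Ici 0)) (hn : ‖b 0‖ = 1) (hn' : ‖b' 0‖ = 1)
    (h : ∀ᶠ t in atTop, ⟪b t, v t⟫ ≤ -1 / 4) (h' : ∀ᶠ t in atTop, ⟪b' t, v t⟫ ≤ -1 / 4) :
    b 0 = b' 0 := by
  obtain ⟨G, hG⟩ := exists_one_sub_inner_eq hb hb' hv
  obtain ⟨T, hT⟩ := eventually_atTop.1 ((h.and h').and (eventually_ge_atTop 0))
  have hT0 : 0 ≤ T := (hT T le_rfl).2
  have hbn := norm_eq_one_of_hasDerivAt_proj hb hv hn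
  have hbn' := norm_eq_one_of_hasDerivAt_proj hb' hv hn'
  have hd : ∀ t ≥ (0 : ℝ), 0 ≤ 1 - ⟪b t, b' t⟫ ∧ 1 - ⟪b t, b' t⟫ ≤ 2 := by
    intro t ht
    have := abs_le.1 (abs_real_inner_le_norm (b t) (b' t))
    rw [hbn t ht, hbn' t ht] at this
    constructor <;> linarith [this.1, this.2]
  have hder : ∀ t ≥ T, HasDerivAt (fun s => (1 - ⟪b s, b' s⟫) * Real.exp (-(s / 2)))
      ((-(⟪b t, v t⟫ + ⟪b' t, v t⟫) * (1 - ⟪b t, b' t⟫)) * Real.exp (-(t / 2)) +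
        (1 - ⟪b t, b' t⟫) * (Real.exp (-(t / 2)) * (-(1 / 2)))) t := fun t ht =>
    (hasDerivAt_one_sub_inner hb hb' (hT0.trans ht)).mul
      (((hasDerivAt_id t).div_const 2).neg.exp)
  have hmono : MonotoneOn (fun s => (1 - ⟪b s, b' s⟫) * Real.exp (-(s / 2))) (Set.Ici T) := by
    refine monotoneOn_of_hasDerivWithinAt_nonneg (convex_Ici T)
      (fun t ht => (hder t ht).continuousAt.continuousWithinAt)
      (fun t ht => (hder t (interior_subset ht)).hasDerivWithinAt) fun t ht => ?_
    have htT := hT t (interior_subset ht)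
    have h1 := (hd t htT.2).1
    have h2 : 0 ≤ -(⟪b t, v t⟫ + ⟪b' t, v t⟫) - 1 / 2 := by linarith [htT.1.1, htT.1.2]
    have := mul_nonneg (mul_nonneg h2 h1) (Real.exp_pos (-(t / 2))).le
    linarith
  have hlim : Tendsto (fun s : ℝ => 2 * Real.exp (-(s / 2))) atTop (nhds 0) := by
    have := (Real.tendsto_exp_neg_atTop_nhds_zero.comp
      (tendsto_id.atTop_div_const (two_pos (α := ℝ)))).const_mul 2
    simpa using this
  have hle : (1 - ⟪b T, b' T⟫) * Real.exp (-(T / 2)) ≤ 0 := by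
    refine ge_of_tendsto hlim ?_
    filter_upwards [eventually_ge_atTop T] with t ht
    exact (hmono (Set.mem_Ici.2 le_rfl) ht ht).trans
      (mul_le_mul_of_nonneg_right (hd t (hT0.trans ht)).2 (Real.exp_pos _).le)
  have hTz : (1 - ⟪b 0, b' 0⟫) * Real.exp (G T) ≤ 0 := by
    rw [← hG T hT0]
    exact nonpos_of_mul_nonpos_left hle (Real.exp_pos _)
  have h0 := nonpos_of_mul_nonpos_left hTz (Real.exp_pos _)
  exact (inner_eq_one_iff_of_norm_eq_one (𝕜 := ℝ) hn hn').1 (by linarith [(hd 0 le_rfl).1])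

lemma norm_sub_sq_of_norm_eq_one {x y : EuclideanSpace ℝ (Fin 2)} (hx : ‖x‖ = 1) (hy : ‖y‖ = 1) :
    ‖x - y‖ ^ 2 = 2 * (1 - ⟪x, y⟫) := by
  rw [norm_sub_sq_real, hx, hy]
  ring

/-- A heading driven by an exponentially convergent direction either converges to its limit
or eventually stays away from it. -/
lemma tendsto_or_eventually_inner_le
    (hb : ∀ t ≥ (0 : ℝ), HasDerivAt b (proj (b t) (v t)) t) (hbn : ∀ t ≥ (0 : ℝ), ‖b t‖ = 1)
    {u : EuclideanSpace ℝ (Fin 2)} (hu : ‖u‖ = 1) {C : ℝ}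
    (hv : ∀ t ≥ (0 : ℝ), ‖v t - u‖ ≤ C * Real.exp (-t)) :
    Tendsto b atTop (nhds u) ∨ ∀ᶠ t in atTop, ⟪b t, v t⟫ ≤ -1 / 4 := by
  have hC : Tendsto (fun t : ℝ => C * Real.exp (-t)) atTop (nhds 0) := by
    simpa using Real.tendsto_exp_neg_atTop_nhds_zero.const_mul C
  obtain ⟨T, hT⟩ := eventually_atTop.1
    ((hC.eventually (gt_mem_nhds (show (0 : ℝ) < 1 / 8 by norm_num))).and (eventually_ge_atTop 0))
  by_cases hcase : ∃ t₀ ≥ T, -1 / 2 ≤ ⟪b t₀, u⟫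
  swap
  · right
    push Not at hcase
    filter_upwards [eventually_ge_atTop T] with t ht
    have h1 : ⟪b t, v t⟫ = ⟪b t, u⟫ + ⟪b t, v t - u⟫ := by rw [inner_sub_right]; ring
    have h2 := real_inner_le_norm (b t) (v t - u)
    rw [hbn t (hT t ht).2, one_mul] at h2
    linarith [hcase t ht, hv t (hT t ht).2, (hT t ht).1]
  left
  obtain ⟨t₀, ht₀, hstart⟩ := hcase
  have hpos : ∀ t ≥ t₀, 0 ≤ t := fun t ht => (hT t (ht₀.trans ht)).2
  have hrange : ∀ t ≥ t₀, -1 ≤ ⟪b t, u⟫ ∧ ⟪b t, u⟫ ≤ 1 := by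
    intro t ht
    have := abs_le.1 (abs_real_inner_le_norm (b t) u)
    rw [hbn t (hpos t ht), hu] at this
    constructor <;> linarith [this.1, this.2]
  have hlow : ∀ t ≥ t₀, 1 - ⟪b t, u⟫ ^ 2 - 2 * (C * Real.exp (-t)) ≤
      ⟪v t, u⟫ - ⟪b t, v t⟫ * ⟪b t, u⟫ := by
    intro t ht
    have h1 : ⟪v t, u⟫ = 1 + ⟪v t - u, u⟫ := by
      rw [inner_sub_left, real_inner_self_eq_norm_sq, hu]; ring
    have h2 : ⟪b t, v t⟫ = ⟪b t, u⟫ + ⟪b t, v t - u⟫ := by rw [inner_sub_right]; ring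
    have h3 := abs_le.1 (abs_real_inner_le_norm (v t - u) u)
    have h4 := abs_real_inner_le_norm (b t) (v t - u)
    rw [hu, mul_one] at h3
    rw [hbn t (hpos t ht), one_mul] at h4
    have h5 : |⟪b t, v t - u⟫ * ⟪b t, u⟫| ≤ ‖v t - u‖ := by
      rw [abs_mul]
      calc _ ≤ ‖v t - u‖ * 1 := mul_le_mul h4 (abs_le.2 (hrange t ht)) (abs_nonneg _)
            (norm_nonneg _)
        _ = _ := mul_one _
    have h6 := abs_le.1 h5
    rw [h1, h2]
    nlinarith [hv t (hpos t ht), h3.1, h6.2]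
  have hder : ∀ t ≥ t₀, HasDerivAt (fun s => ⟪b s, u⟫) (⟪v t, u⟫ - ⟪b t, v t⟫ * ⟪b t, u⟫) t :=
    fun t ht => hasDerivAt_inner_of_proj hb u (hpos t ht)
  have hinv : ∀ t ≥ t₀, -1 / 2 ≤ ⟪b t, u⟫ := by
    intro t ht
    have := image_le_of_deriv_right_lt_deriv_boundary (a := t₀) (b := t)
      (f := fun s => -⟪b s, u⟫) (f' := fun s => -(⟪v s, u⟫ - ⟪b s, v s⟫ * ⟪b s, u⟫))
      (B := fun _ => 1 / 2) (B' := fun _ => 0)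
      (fun s hs => (hder s hs.1).neg.continuousAt.continuousWithinAt)
      (fun s hs => (hder s hs.1).neg.hasDerivWithinAt) (by linarith)
      (fun s => hasDerivAt_const s _)
      (fun s hs heq => by
        have h1 := hlow s hs.1
        have h2 := (hT s (ht₀.trans hs.1)).1
        have h3 : ⟪b s, u⟫ = -1 / 2 := by linarith
        rw [h3] at h1 ⊢
        linarith) ⟨ht, le_rfl⟩
    linarith
  have hC0 : 0 ≤ C := by
    have := (norm_nonneg _).trans (hv 0 le_rfl)
    simpa using this
  have hF : ∀ t ≥ t₀, HasDerivAt
      (fun s => (1 - ⟪b s, u⟫) * Real.exp (s / 2) + 4 * C * Real.exp (-(s / 2)))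
      ((-(⟪v t, u⟫ - ⟪b t, v t⟫ * ⟪b t, u⟫)) * Real.exp (t / 2) +
        (1 - ⟪b t, u⟫) * (Real.exp (t / 2) * (1 / 2)) +
          4 * C * (Real.exp (-(t / 2)) * (-(1 / 2)))) t := fun t ht =>
    (((hder t ht).const_sub 1).mul ((hasDerivAt_id t).div_const 2).exp).add
      ((((hasDerivAt_id t).div_const 2).neg.exp).const_mul (4 * C))
  have hanti : AntitoneOn
      (fun s => (1 - ⟪b s, u⟫) * Real.exp (s / 2) + 4 * C * Real.exp (-(s / 2)))
      (Set.Ici t₀) := by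
    refine antitoneOn_of_hasDerivWithinAt_nonpos (convex_Ici t₀)
      (fun t ht => (hF t ht).continuousAt.continuousWithinAt)
      (fun t ht => (hF t (interior_subset ht)).hasDerivWithinAt) fun t ht => ?_
    have ht' : t₀ ≤ t := interior_subset ht
    have he : Real.exp (-(t / 2)) = Real.exp (-t) * Real.exp (t / 2) := by
      rw [← Real.exp_add]; ring_nf
    have h1 := hlow t ht'
    have h2 : 0 ≤ (1 / 2 + ⟪b t, u⟫) * (1 - ⟪b t, u⟫) :=
      mul_nonneg (by linarith [hinv t ht']) (by linarith [(hrange t ht').2])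
    have h3 : 0 ≤ (⟪v t, u⟫ - ⟪b t, v t⟫ * ⟪b t, u⟫) - (1 - ⟪b t, u⟫) * (1 / 2) +
        2 * (C * Real.exp (-t)) := by nlinarith
    have := mul_nonneg h3 (Real.exp_pos (t / 2)).le
    rw [he]
    linarith
  set K := (1 - ⟪b t₀, u⟫) * Real.exp (t₀ / 2) + 4 * C * Real.exp (-(t₀ / 2)) with hK
  have hlim : Tendsto (fun s : ℝ => 2 * (K * Real.exp (-(s / 2)))) atTop (nhds 0) := by
    have := ((Real.tendsto_exp_neg_atTop_nhds_zero.comp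
      (tendsto_id.atTop_div_const (two_pos (α := ℝ)))).const_mul K).const_mul 2
    simpa using this
  have hsq : Tendsto (fun t => ‖b t - u‖ ^ 2) atTop (nhds 0) := by
    refine squeeze_zero' (Eventually.of_forall fun t => sq_nonneg _) ?_ hlim
    filter_upwards [eventually_ge_atTop t₀] with t ht
    rw [norm_sub_sq_of_norm_eq_one (hbn t (hpos t ht)) hu]
    have h1 := hanti (Set.mem_Ici.2 le_rfl) ht ht
    simp only [← hK] at h1
    have h2 : (1 - ⟪b t, u⟫) * Real.exp (t / 2) ≤ K := by
      have := mul_nonneg hC0 (Real.exp_pos (-(t / 2))).le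
      linarith
    have h3 := mul_le_mul_of_nonneg_right h2 (Real.exp_pos (-(t / 2))).le
    rw [mul_assoc, ← Real.exp_add, add_neg_cancel, Real.exp_zero, mul_one] at h3
    linarith
  rw [tendsto_iff_norm_sub_tendsto_zero]
  simpa [Real.sqrt_sq (norm_nonneg _)] using hsq.sqrt

/-- The autonomous heading converges exponentially unless it starts at the antipode. -/
lemma exists_norm_sub_le_exp {u : EuclideanSpace ℝ (Fin 2)} (hu : ‖u‖ = 1)
    (hb : ∀ t ≥ (0 : ℝ), HasDerivAt b (proj (b t) u) t) (hn : ‖b 0‖ = 1)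
    (h0 : -1 < ⟪b 0, u⟫) : ∃ C : ℝ, ∀ t ≥ (0 : ℝ), ‖b t - u‖ ≤ C * Real.exp (-t) := by
  have hbc := continuousOn_of_hasDerivAt_proj hb
  have hbn := norm_eq_one_of_hasDerivAt_proj hb continuousOn_const hn
  have hrange : ∀ t ≥ (0 : ℝ), ⟪b t, u⟫ ≤ 1 := by
    intro t ht
    have := real_inner_le_norm (b t) u
    rwa [hbn t ht, hu, one_mul] at this
  set k := (1 - ⟪b 0, u⟫) / (1 + ⟪b 0, u⟫) with hk
  have hk0 : 0 ≤ k := div_nonneg (by linarith [hrange 0 le_rfl]) (by linarith)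
  obtain ⟨G, hG⟩ := exists_eq_mul_exp_of_hasDerivAt
    (y := fun t => (1 - ⟪b t, u⟫) * Real.exp (2 * t) - k * (1 + ⟪b t, u⟫))
    (g := fun t => 1 - ⟪b t, u⟫)
    (fun t ht => by
      have hd := hasDerivAt_inner_of_proj hb u ht
      refine (((hd.const_sub 1).mul ((hasDerivAt_id t).const_mul 2).exp).sub
        ((hd.const_add 1).const_mul k)).congr_deriv ?_
      simp only [real_inner_self_eq_norm_sq, hu, id]
      ring)
    (continuousOn_const.sub (hbc.inner continuousOn_const))
  refine ⟨2 * √k, fun t ht => ?_⟩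
  have hy0 : (1 - ⟪b 0, u⟫) * Real.exp (2 * 0) - k * (1 + ⟪b 0, u⟫) = 0 := by
    rw [hk, div_mul_cancel₀ _ (by linarith)]
    simp
  have h := hG t ht
  simp only [hy0, zero_mul] at h
  have h1 : (1 - ⟪b t, u⟫) * Real.exp (2 * t) ≤ 2 * k := by nlinarith [hrange t ht]
  have h2 := mul_le_mul_of_nonneg_right h1 (Real.exp_pos (-(2 * t))).le
  rw [mul_assoc, ← Real.exp_add, add_neg_cancel, Real.exp_zero, mul_one] at h2
  refine le_of_sq_le_sq ?_ (by positivity)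
  rw [norm_sub_sq_of_norm_eq_one (hbn t ht) hu, mul_pow, mul_pow, Real.sq_sqrt hk0,
    ← Real.exp_nat_mul]
  have : ((2 : ℕ) : ℝ) * -t = -(2 * t) := by push_cast; ring
  rw [this]
  linarith

lemma tendsto_of_norm_sub_le_exp {u : EuclideanSpace ℝ (Fin 2)} {C : ℝ}
    (hC : ∀ t ≥ (0 : ℝ), ‖b t - u‖ ≤ C * Real.exp (-t)) : Tendsto b atTop (nhds u) := by
  rw [tendsto_iff_norm_sub_tendsto_zero]
  refine squeeze_zero' (Eventually.of_forall fun t => norm_nonneg _)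
    (eventually_atTop.2 ⟨0, hC⟩) ?_
  simpa using Real.tendsto_exp_neg_atTop_nhds_zero.const_mul C

end Projected

section Plane

lemma rot_apply_zero (α : ℝ) (x : EuclideanSpace ℝ (Fin 2)) :
    rot α x 0 = Real.cos α * x 0 - Real.sin α * x 1 := rfl

lemma rot_apply_one (α : ℝ) (x : EuclideanSpace ℝ (Fin 2)) :
    rot α x 1 = Real.sin α * x 0 + Real.cos α * x 1 := rfl

lemma norm_rot_sub_rot (α : ℝ) (x y : EuclideanSpace ℝ (Fin 2)) :
    ‖rot α x - rot α y‖ = ‖x - y‖ := by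
  simp only [EuclideanSpace.norm_eq, Fin.sum_univ_two, PiLp.sub_apply, Real.norm_eq_abs, sq_abs,
    rot_apply_zero, rot_apply_one]
  congr 1
  linear_combination ((x 0 - y 0) ^ 2 + (x 1 - y 1) ^ 2) * Real.sin_sq_add_cos_sq α

lemma continuous_rot (α : ℝ) : Continuous (rot α) :=
  (LipschitzWith.of_dist_le_mul (K := 1) fun x y => by
    simp [dist_eq_norm, norm_rot_sub_rot]).continuous

lemma norm_rot (α : ℝ) (x : EuclideanSpace ℝ (Fin 2)) : ‖rot α x‖ = ‖x‖ := by
  have h : rot α 0 = 0 := by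
    ext i
    fin_cases i <;> simp [rot]
  simpa [h] using norm_rot_sub_rot α x 0

lemma inner_eq_coords (x y : EuclideanSpace ℝ (Fin 2)) : ⟪x, y⟫ = x 0 * y 0 + x 1 * y 1 := by
  simp [PiLp.inner_apply, Fin.sum_univ_two, mul_comm]

lemma inner_rot_pi_div_two (x u : EuclideanSpace ℝ (Fin 2)) :
    ⟪x, rot (π / 2) u⟫ = x 1 * u 0 - x 0 * u 1 := by
  rw [inner_eq_coords, rot_apply_zero, rot_apply_one, Real.cos_pi_div_two, Real.sin_pi_div_two]
  ring

lemma coords_sq_of_norm_eq_one {u : EuclideanSpace ℝ (Fin 2)} (hu : ‖u‖ = 1) :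
    u 0 ^ 2 + u 1 ^ 2 = 1 := by
  have h := real_inner_self_eq_norm_sq u
  rw [inner_eq_coords, hu] at h
  linarith

lemma inner_sq_add_inner_rot_sq {x u : EuclideanSpace ℝ (Fin 2)} (hx : ‖x‖ = 1) (hu : ‖u‖ = 1) :
    ⟪x, u⟫ ^ 2 + ⟪x, rot (π / 2) u⟫ ^ 2 = 1 := by
  rw [inner_eq_coords, inner_rot_pi_div_two]
  linear_combination (u 0 ^ 2 + u 1 ^ 2) * coords_sq_of_norm_eq_one hx +
    coords_sq_of_norm_eq_one hu

lemma eq_of_inner_eq_of_inner_rot_eq {x y u : EuclideanSpace ℝ (Fin 2)} (hu : ‖u‖ = 1)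
    (h : ⟪x, u⟫ = ⟪y, u⟫) (h' : ⟪x, rot (π / 2) u⟫ = ⟪y, rot (π / 2) u⟫) : x = y := by
  rw [inner_eq_coords, inner_eq_coords] at h
  rw [inner_rot_pi_div_two, inner_rot_pi_div_two] at h'
  have hs := coords_sq_of_norm_eq_one hu
  ext i
  fin_cases i
  · change x 0 = y 0
    linear_combination u 0 * h - u 1 * h' - (x 0 - y 0) * hs
  · change x 1 = y 1
    linear_combination u 1 * h + u 0 * h' - (x 1 - y 1) * hs

lemma abs_inner_lt_one {x u : EuclideanSpace ℝ (Fin 2)} (hx : ‖x‖ = 1) (hu : ‖u‖ = 1)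
    (h : ⟪x, rot (π / 2) u⟫ ≠ 0) : |⟪x, u⟫| < 1 := by
  rw [← sq_lt_one_iff_abs_lt_one]
  have := inner_sq_add_inner_rot_sq hx hu
  have := sq_pos_of_ne_zero h
  linarith

lemma continuous_dir : Continuous dir := by
  refine (PiLp.continuous_toLp 2 _).comp (continuous_pi fun i => ?_)
  fin_cases i
  · exact Real.continuous_cos
  · exact Real.continuous_sin

lemma inner_dir_dir (θ θ' : ℝ) : ⟪dir θ, dir θ'⟫ = Real.cos (θ - θ') := by
  rw [inner_eq_coords, Real.cos_sub]
  rfl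

lemma norm_dir (θ : ℝ) : ‖dir θ‖ = 1 := by
  have h := real_inner_self_eq_norm_sq (dir θ)
  rw [inner_dir_dir, sub_self, Real.cos_zero] at h
  nlinarith [norm_nonneg (dir θ)]

lemma countable_setOf_dir_eq (z : EuclideanSpace ℝ (Fin 2)) : {θ | dir θ = z}.Countable := by
  rcases Set.eq_empty_or_nonempty {θ | dir θ = z} with h | ⟨θ₀, h₀⟩
  · simp [h]
  refine (Set.countable_range fun n : ℤ => θ₀ + n * (2 * π)).mono fun θ hθ => ?_
  have h : Real.cos (θ - θ₀) = 1 := by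
    have hθ' : dir θ = dir θ₀ := Eq.trans hθ (Eq.symm h₀)
    rw [← inner_dir_dir, hθ', inner_dir_dir, sub_self, Real.cos_zero]
  obtain ⟨n, hn⟩ := (Real.cos_eq_one_iff _).1 h
  exact ⟨n, by simp only [hn]; ring⟩

lemma countable_setOf_inner_dir_rot_eq_zero {u : EuclideanSpace ℝ (Fin 2)} (hu : ‖u‖ = 1) :
    {θ | ⟪dir θ, rot (π / 2) u⟫ = 0}.Countable := by
  refine ((countable_setOf_dir_eq u).union (countable_setOf_dir_eq (-u))).mono fun θ hθ => ?_
  have h := inner_sq_add_inner_rot_sq (norm_dir θ) hu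
  rw [show ⟪dir θ, rot (π / 2) u⟫ = 0 from hθ, zero_pow two_ne_zero, add_zero, sq_eq_one_iff] at h
  rcases h with h | h
  · exact Or.inl ((inner_eq_one_iff_of_norm_eq_one (𝕜 := ℝ) (norm_dir θ) hu).1 h)
  · refine Or.inr ((inner_eq_one_iff_of_norm_eq_one (𝕜 := ℝ) (norm_dir θ)
      ((norm_neg u).trans hu)).1 ?_)
    rw [inner_neg_right, h, neg_neg]

end Plane

/-- Solutions of the cascade on the torus whose first heading starts on the side `σ` of the axis
through `u` and whose second heading does not converge to `R(α) u`. -/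
structure IsExceptional (u : EuclideanSpace ℝ (Fin 2)) (α σ : ℝ)
    (b1 b2 : ℝ → EuclideanSpace ℝ (Fin 2)) : Prop where
  deriv_fst : ∀ t ≥ (0 : ℝ), HasDerivAt b1 (proj (b1 t) u) t
  deriv_snd : ∀ t ≥ (0 : ℝ), HasDerivAt b2 (proj (b2 t) (rot α (b1 t))) t
  norm_fst : ‖b1 0‖ = 1
  norm_snd : ‖b2 0‖ = 1
  side : 0 < σ * ⟪b1 0, rot (π / 2) u⟫
  not_tendsto : ¬ Tendsto b2 atTop (nhds (rot α u))

namespace IsExceptional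

variable {u : EuclideanSpace ℝ (Fin 2)} {α σ : ℝ} {b1 b2 c1 c2 : ℝ → EuclideanSpace ℝ (Fin 2)}

lemma continuousOn_rot (h : IsExceptional u α σ b1 b2) :
    ContinuousOn (fun t => rot α (b1 t)) (Set.Ici 0) :=
  (continuous_rot α).comp_continuousOn (continuousOn_of_hasDerivAt_proj h.deriv_fst)

lemma norm_fst_eq (h : IsExceptional u α σ b1 b2) : ∀ t ≥ (0 : ℝ), ‖b1 t‖ = 1 :=
  norm_eq_one_of_hasDerivAt_proj h.deriv_fst continuousOn_const h.norm_fst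

lemma norm_snd_eq (h : IsExceptional u α σ b1 b2) : ∀ t ≥ (0 : ℝ), ‖b2 t‖ = 1 :=
  norm_eq_one_of_hasDerivAt_proj h.deriv_snd h.continuousOn_rot h.norm_snd

lemma side_pos (h : IsExceptional u α σ b1 b2) {t : ℝ} (ht : 0 ≤ t) :
    0 < σ * ⟪b1 t, rot (π / 2) u⟫ := by
  obtain ⟨G, hG⟩ := exists_eq_mul_exp_of_hasDerivAt
    (y := fun t => ⟪b1 t, rot (π / 2) u⟫) (g := fun t => -⟪b1 t, u⟫)
    (fun t ht => (hasDerivAt_inner_of_proj h.deriv_fst _ ht).congr_deriv (by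
      rw [inner_rot_pi_div_two u u]; ring))
    ((continuousOn_of_hasDerivAt_proj h.deriv_fst).inner continuousOn_const).neg
  rw [hG t ht, ← mul_assoc]
  exact mul_pos h.side (Real.exp_pos _)

lemma abs_inner_fst_lt_one (h : IsExceptional u α σ b1 b2) (hu : ‖u‖ = 1) {t : ℝ} (ht : 0 ≤ t) :
    |⟪b1 t, u⟫| < 1 :=
  abs_inner_lt_one (h.norm_fst_eq t ht) hu (right_ne_zero_of_mul (h.side_pos ht).ne')

lemma strictMonoOn_inner_fst (h : IsExceptional u α σ b1 b2) (hu : ‖u‖ = 1) :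
    StrictMonoOn (fun t => ⟪b1 t, u⟫) (Set.Ici 0) := by
  refine strictMonoOn_of_hasDerivWithinAt_pos (convex_Ici 0)
    ((continuousOn_of_hasDerivAt_proj h.deriv_fst).inner continuousOn_const)
    (fun t ht => (hasDerivAt_inner_of_proj h.deriv_fst u (interior_subset ht)).hasDerivWithinAt)
    fun t ht => ?_
  have := (sq_lt_one_iff_abs_lt_one _).2 (h.abs_inner_fst_lt_one hu (interior_subset ht))
  rw [real_inner_self_eq_norm_sq, hu]
  linarith

lemma exists_norm_fst_sub_le (h : IsExceptional u α σ b1 b2) (hu : ‖u‖ = 1) :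
    ∃ C : ℝ, ∀ t ≥ (0 : ℝ), ‖b1 t - u‖ ≤ C * Real.exp (-t) :=
  exists_norm_sub_le_exp hu h.deriv_fst h.norm_fst
    (abs_lt.1 (h.abs_inner_fst_lt_one hu le_rfl)).1

lemma eventually_inner_snd_le (h : IsExceptional u α σ b1 b2) (hu : ‖u‖ = 1) :
    ∀ᶠ t in atTop, ⟪b2 t, rot α (b1 t)⟫ ≤ -1 / 4 := by
  obtain ⟨C, hC⟩ := h.exists_norm_fst_sub_le hu
  exact (tendsto_or_eventually_inner_le h.deriv_snd h.norm_snd_eq ((norm_rot α u).trans hu)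
    fun t ht => (norm_rot_sub_rot α _ _).trans_le (hC t ht)).resolve_left h.not_tendsto

lemma shift (h : IsExceptional u α σ b1 b2) {s : ℝ} (hs : 0 ≤ s) :
    IsExceptional u α σ (fun t => b1 (t + s)) (fun t => b2 (t + s)) where
  deriv_fst t ht := (h.deriv_fst (t + s) (add_nonneg ht hs)).comp_add_const t s
  deriv_snd t ht := (h.deriv_snd (t + s) (add_nonneg ht hs)).comp_add_const t s
  norm_fst := h.norm_fst_eq _ (by linarith)
  norm_snd := h.norm_snd_eq _ (by linarith)
  side := h.side_pos (by linarith)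
  not_tendsto ht := h.not_tendsto <| by
    have := ht.comp (tendsto_atTop_add_const_right atTop (-s) tendsto_id)
    simpa [Function.comp_def] using this

/-- Over a given first heading there is at most one exceptional second heading. -/
lemma snd_eq_of_fst_eq (h : IsExceptional u α σ b1 b2) (h' : IsExceptional u α σ c1 c2)
    (hu : ‖u‖ = 1) (h0 : c1 0 = b1 0) : c2 0 = b2 0 := by
  have heq := eq_of_hasDerivAt_proj_of_eq h'.deriv_fst h.deriv_fst continuousOn_const
    h'.norm_fst h0
  refine eq_of_eventually_inner_le (v := fun t => rot α (b1 t))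
    (fun t ht => heq t ht ▸ h'.deriv_snd t ht) h.deriv_snd h.continuousOn_rot
    h'.norm_snd h.norm_snd ?_ (h.eventually_inner_snd_le hu)
  filter_upwards [h'.eventually_inner_snd_le hu, eventually_ge_atTop 0] with t h1 h2
  rwa [← heq t h2]

/-- An exceptional solution runs through the initial values of all those on the same side that
start closer to `u`. -/
lemma exists_eq (h : IsExceptional u α σ b1 b2) (h' : IsExceptional u α σ c1 c2)
    (hu : ‖u‖ = 1) (hle : ⟪b1 0, u⟫ ≤ ⟪c1 0, u⟫) :
    ∃ s ≥ (0 : ℝ), c1 0 = b1 s ∧ c2 0 = b2 s := by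
  obtain ⟨C, hC⟩ := h.exists_norm_fst_sub_le hu
  have hlim := tendsto_of_norm_sub_le_exp hC
  have hlim' : Tendsto (fun t => ⟪b1 t, u⟫) atTop (nhds 1) := by
    have := hlim.inner (𝕜 := ℝ) (tendsto_const_nhds (x := u))
    rwa [real_inner_self_eq_norm_sq, hu, one_pow] at this
  obtain ⟨T, hT, hT0⟩ := ((hlim'.eventually (lt_mem_nhds
    (abs_lt.1 (h'.abs_inner_fst_lt_one hu le_rfl)).2)).and (eventually_ge_atTop 0)).exists
  obtain ⟨s, hs, hs'⟩ := intermediate_value_Icc hT0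
    (((continuousOn_of_hasDerivAt_proj h.deriv_fst).inner continuousOn_const).mono
      Set.Icc_subset_Ici_self) ⟨hle, hT.le⟩
  have hfst : c1 0 = b1 s := by
    refine eq_of_inner_eq_of_inner_rot_eq hu hs'.symm ?_
    have h1 := inner_sq_add_inner_rot_sq h'.norm_fst hu
    have h2 := inner_sq_add_inner_rot_sq (h.norm_fst_eq s hs.1) hu
    simp only at hs'
    rw [hs'] at h2
    have h3 : ⟪c1 0, rot (π / 2) u⟫ ^ 2 = ⟪b1 s, rot (π / 2) u⟫ ^ 2 := by linarith
    rcases sq_eq_sq_iff_eq_or_eq_neg.1 h3 with h4 | h4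
    · exact h4
    · have h5 := h'.side
      have h6 := h.side_pos hs.1
      rw [h4] at h5
      linarith
  refine ⟨s, hs.1, hfst, ?_⟩
  have := (h.shift hs.1).snd_eq_of_fst_eq h' hu (by simpa using hfst)
  simpa using this

lemma volume_setOf_dir_mem_trajectory (h : IsExceptional u α σ b1 b2) (hu : ‖u‖ = 1) :
    volume {θ : ℝ × ℝ | ∃ s ≥ (0 : ℝ), dir θ.1 = b1 s ∧ dir θ.2 = b2 s} = 0 := by
  have hcover : {θ : ℝ × ℝ | ∃ s ≥ (0 : ℝ), dir θ.1 = b1 s ∧ dir θ.2 = b2 s} ⊆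
      ⋃ n : ℕ, (fun θ : ℝ × ℝ => (dir θ.1, dir θ.2)) ⁻¹'
        ((fun s => (b1 s, b2 s)) '' Set.Icc 0 (n : ℝ)) := by
    rintro θ ⟨s, hs, h1, h2⟩
    obtain ⟨n, hn⟩ := exists_nat_ge s
    exact Set.mem_iUnion.2 ⟨n, s, ⟨hs, hn⟩, Prod.ext h1.symm h2.symm⟩
  refine measure_mono_null hcover (measure_iUnion_null fun n => ?_)
  have hcompact : IsCompact ((fun s => (b1 s, b2 s)) '' Set.Icc 0 (n : ℝ)) :=
    isCompact_Icc.image_of_continuousOn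
      (((continuousOn_of_hasDerivAt_proj h.deriv_fst).prodMk
        (continuousOn_of_hasDerivAt_proj h.deriv_snd)).mono Set.Icc_subset_Ici_self)
  have hclosed := hcompact.isClosed.preimage
    ((continuous_dir.comp continuous_fst).prodMk (continuous_dir.comp continuous_snd))
  rw [Measure.volume_eq_prod]
  refine (Measure.measure_prod_null hclosed.measurableSet).2 (Eventually.of_forall fun x => ?_)
  by_cases hx : ∃ s ∈ Set.Icc 0 (n : ℝ), b1 s = dir x
  · obtain ⟨s, hs, hsx⟩ := hx
    refine measure_mono_null ?_ ((countable_setOf_dir_eq (b2 s)).measure_zero volume)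
    rintro y ⟨r, hr, hry⟩
    obtain ⟨h1, h2⟩ := Prod.ext_iff.1 hry
    have hrs : r = s := (h.strictMonoOn_inner_fst hu).injOn hr.1 hs.1
      (congrArg (fun z => ⟪z, u⟫) (Eq.trans h1 hsx.symm))
    exact hrs ▸ h2.symm
  · refine measure_mono_null ?_ measure_empty
    rintro y ⟨r, hr, hry⟩
    exact hx ⟨r, hr, (Prod.ext_iff.1 hry).1⟩

end IsExceptional

/-- Every set of reals has a countable coinitial subset. -/
lemma exists_countable_coinitial (X : Set ℝ) :
    ∃ D ⊆ X, D.Countable ∧ ∀ x ∈ X, ∃ d ∈ D, d ≤ x := by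
  obtain ⟨D, hDX, hD, hdense⟩ :=
    (TopologicalSpace.IsSeparable.of_separableSpace X).exists_countable_dense_subset
  by_cases hmin : ∃ m ∈ X, ∀ x ∈ X, m ≤ x
  · obtain ⟨m, hm, hle⟩ := hmin
    exact ⟨{m}, Set.singleton_subset_iff.2 hm, Set.countable_singleton m,
      fun x hx => ⟨m, rfl, hle x hx⟩⟩
  · push Not at hmin
    refine ⟨D, hDX, hD, fun x hx => ?_⟩
    obtain ⟨y, hy, hyx⟩ := hmin x hx
    obtain ⟨d, hdx, hd⟩ := mem_closure_iff.1 (hdense hy) (Set.Iio x) isOpen_Iio hyx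
    exact ⟨d, hd, le_of_lt hdx⟩

lemma volume_setOf_isExceptional {u : EuclideanSpace ℝ (Fin 2)} (hu : ‖u‖ = 1) (α σ : ℝ) :
    volume {θ : ℝ × ℝ | ∃ b1 b2, IsExceptional u α σ b1 b2 ∧ b1 0 = dir θ.1 ∧ b2 0 = dir θ.2}
      = 0 := by
  obtain ⟨D, hDX, hD, hcoinit⟩ := exists_countable_coinitial
    {x | ∃ b1 b2, IsExceptional u α σ b1 b2 ∧ ⟪b1 0, u⟫ = x}
  choose b1 b2 hex hval using hDX
  have : Countable D := hD.to_subtype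
  refine measure_mono_null (t := ⋃ d : D, {θ : ℝ × ℝ | ∃ s ≥ (0 : ℝ),
    dir θ.1 = b1 d.2 s ∧ dir θ.2 = b2 d.2 s}) ?_
    (measure_iUnion_null fun d => (hex d.2).volume_setOf_dir_mem_trajectory hu)
  rintro θ ⟨c1, c2, hc, h1, h2⟩
  obtain ⟨d, hd, hle⟩ := hcoinit ⟪c1 0, u⟫ ⟨c1, c2, hc, rfl⟩
  obtain ⟨s, hs, hs1, hs2⟩ := (hex hd).exists_eq hc hu ((hval hd).trans_le hle)
  exact Set.mem_iUnion.2 ⟨⟨d, hd⟩, s, hs, h1.symm.trans hs1, h2.symm.trans hs2⟩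

/-- Almost-global asymptotic attractivity of (b₁*, R(α)b₁*) for the cascade
ḃ₁ = P_{b₁} b₁*, ḃ₂ = P_{b₂} R(α) b₁ on the torus: for a.e. pair of initial angles,
every solution converges to (b₁*, R(α)b₁*). -/
theorem stmt9 (b1s : EuclideanSpace ℝ (Fin 2)) (hb1s : ‖b1s‖ = 1) (α : ℝ) :
    ∀ᵐ θ : ℝ × ℝ ∂volume, ∀ b1 b2 : ℝ → EuclideanSpace ℝ (Fin 2),
      (∀ t ≥ (0 : ℝ), HasDerivAt b1 (proj (b1 t) b1s) t) →
      (∀ t ≥ (0 : ℝ), HasDerivAt b2 (proj (b2 t) (rot α (b1 t))) t) →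
      b1 0 = dir θ.1 → b2 0 = dir θ.2 →
      Filter.Tendsto b1 Filter.atTop (nhds b1s)
      ∧ Filter.Tendsto b2 Filter.atTop (nhds (rot α b1s)) := by
  have haxis : ∀ᵐ θ : ℝ × ℝ ∂volume, ⟪dir θ.1, rot (π / 2) b1s⟫ ≠ 0 :=
    Measure.quasiMeasurePreserving_fst.ae
      ((countable_setOf_inner_dir_rot_eq_zero hb1s).ae_notMem volume)
  have hexc : ∀ σ : ℝ, ∀ᵐ θ : ℝ × ℝ ∂volume, ¬ ∃ b1 b2,
      IsExceptional b1s α σ b1 b2 ∧ b1 0 = dir θ.1 ∧ b2 0 = dir θ.2 := fun σ =>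
    measure_eq_zero_iff_ae_notMem.1 (volume_setOf_isExceptional hb1s α σ)
  filter_upwards [haxis, hexc 1, hexc (-1)] with θ hθ hpos hneg b1 b2 h1 h2 h10 h20
  have hn1 : ‖b1 0‖ = 1 := h10 ▸ norm_dir θ.1
  have hn2 : ‖b2 0‖ = 1 := h20 ▸ norm_dir θ.2
  rw [← h10] at hθ
  obtain ⟨C, hC⟩ := exists_norm_sub_le_exp hb1s h1 hn1
    (abs_lt.1 (abs_inner_lt_one hn1 hb1s hθ)).1
  refine ⟨tendsto_of_norm_sub_le_exp hC, ?_⟩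
  by_contra hnot
  rcases hθ.lt_or_gt with hlt | hgt
  · exact hneg ⟨b1, b2, ⟨h1, h2, hn1, hn2, by linarith, hnot⟩, h10, h20⟩
  · exact hpos ⟨b1, b2, ⟨h1, h2, hn1, hn2, by linarith, hnot⟩, h10, h20⟩
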